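/- arXiv:2412.18671 — 2 statements merged into one kernel-verified Lean document; each statement's English description precedes it below -/
import Mathlib

section
/- There exist constants c,C>0 such that for all distinct x,y∈D with d(x,y) ≤ (8M³/ε)·min(δ(x),δ(y)), one has c·Ψ(d(x,y))/V(x,d(x,y)) ≤ G(x,y) ≤ C·Ψ(d(x,y))/V(x,d(x,y)). -/
open MeasureTheory Metric Set

/-! The upper bound is the upper decay bound for `G` itself. For the lower bound, if `x` lies in the
closure of `B(y) = ball y (δ y / 2)`, the lower decay bound applies directly. Otherwise connectedness
of `D` gives a point `z ∈ D` on the boundary of `B(y)`; the points `x` and `z` have distance at most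
a fixed multiple of `min (δ x) (δ z)`, so Harnack gives `G z y ≤ C_H k * G x y`, while the lower
decay bound holds at `z`. The comparison
`Ψ (d(x,y)) / V(x, d(x,y)) ≤ C₀ * Ψ (d(z,y)) / V(z, d(z,y))` is exactly the joint hypothesis on `Ψ`
and `V` for the triple `z, y, x`, as `d(z,y) ≤ d(y,x)`. -/

/-- A connected set with a point in an open set `U` and a point outside `closure U` meets
`closure U \ U`. -/
theorem exists_mem_closure_diff {X : Type*} [TopologicalSpace X] {D U : Set X}
    (hD : IsPreconnected D) (hU : IsOpen U) {x y : X} (hx : x ∈ D) (hy : y ∈ D)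
    (hyU : y ∈ U) (hxU : x ∉ closure U) : ∃ z ∈ D, z ∈ closure U ∧ z ∉ U := by
  by_contra! h
  obtain ⟨w, -, hw1, hw2⟩ := hD U (closure U)ᶜ hU isClosed_closure.isOpen_compl
    (fun w hw => by
      by_cases hc : w ∈ closure U
      · exact Or.inl (h w hw hc)
      · exact Or.inr hc) ⟨y, hy, hyU⟩ ⟨x, hx, hxU⟩
  exact hw2 (subset_closure hw1)

theorem stmt5
    {X : Type*} [MetricSpace X] [MeasurableSpace X] [BorelSpace X]
    (μ : MeasureTheory.Measure X)
    (V : X → ℝ → ℝ) (hV : ∀ x r, V x r = (μ (Metric.ball x r)).toReal)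
    (C_V : ℝ) (hC_V : 0 < C_V)
    (hVD : ∀ (x : X) (r : ℝ), 0 < r → V x (2 * r) ≤ C_V * V x r)
    (Ψ : ℝ → ℝ) (hΨpos : ∀ r : ℝ, 0 < r → 0 < Ψ r)
    (hΨmono : StrictMonoOn Ψ (Set.Ioi (0 : ℝ)))
    (hΨcont : ContinuousOn Ψ (Set.Ioi (0 : ℝ)))
    (hΨsurj : ∀ s : ℝ, 0 < s → ∃ r : ℝ, 0 < r ∧ Ψ r = s)
    (β β' C_Ψ : ℝ) (hβ : 1 < β) (hββ' : β ≤ β') (hC_Ψ : 1 < C_Ψ)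
    (hΨscale : ∀ r R : ℝ, 0 < r → r ≤ R →
      C_Ψ⁻¹ * (R / r) ^ β ≤ Ψ R / Ψ r ∧ Ψ R / Ψ r ≤ C_Ψ * (R / r) ^ β')
    (D : Set X) (hDopen : IsOpen D) (hDconn : IsConnected D)
    (hDpre : IsCompact (closure D)) (hDdiam : Metric.diam D = 1)
    (δ : X → ℝ) (hδ : ∀ x, δ x = Metric.infDist x (frontier D))
    (G : X → X → ℝ) (hGpos : ∀ x ∈ D, ∀ y ∈ D, x ≠ y → 0 < G x y)
    (M r₀ C₀ : ℝ) (hM : 3 ≤ M) (hr₀ : 0 < r₀) (hC₀ : 0 < C₀)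
    (hcork : ∀ ξ ∈ frontier D, ∀ r : ℝ, 0 < r → r ≤ r₀ →
      ∃ x ∈ D, dist x ξ < r ∧ r / M < δ x)
    (hGsym : ∀ x ∈ D, ∀ y ∈ D, G x y ≤ C₀ * G y x)
    (hGupper : ∀ x ∈ D, ∀ y ∈ D, x ≠ y →
      G x y ≤ C₀ * (Ψ (dist x y) / V x (dist x y)))
    (hGlower : ∀ x ∈ D, ∀ y ∈ D, x ≠ y →
      x ∈ closure (Metric.ball y (δ y / 2)) →
      C₀⁻¹ * (Ψ (dist x y) / V x (dist x y)) ≤ G x y)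
    (C_H : ℕ → ℝ) (hC_H : ∀ k : ℕ, 0 < C_H k)
    (hHarnack : ∀ k : ℕ, ∀ y ∈ D, ∀ x₁ ∈ D \ Metric.ball y (δ y / 2),
      ∀ x₂ ∈ D \ Metric.ball y (δ y / 2),
      dist x₁ x₂ ≤ (k : ℝ) * min (δ x₁) (δ x₂) → G x₁ y ≤ C_H k * G x₂ y)
    (hΨV : ∀ x ∈ D, ∀ y ∈ D, ∀ z ∈ D, x ≠ y → y ≠ z → x ≠ z →
      dist x y ≤ dist y z →
      Ψ (dist y z) / Ψ (dist x y) ≤ C₀ * (V z (dist y z) / V x (dist x y)))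
    (ε : ℝ) (hε : ε = r₀ / (12 * M)) :
    ∃ c C : ℝ, 0 < c ∧ 0 < C ∧
      ∀ x ∈ D, ∀ y ∈ D, x ≠ y →
        dist x y ≤ (8 * M ^ 3 / ε) * min (δ x) (δ y) →
        c * (Ψ (dist x y) / V x (dist x y)) ≤ G x y ∧
        G x y ≤ C * (Ψ (dist x y) / V x (dist x y)) := by
  have hMpos : 0 < M := by linarith
  have hεpos : 0 < ε := by rw [hε]; positivity
  set K : ℝ := 8 * M ^ 3 / ε with hK
  have hKpos : 0 < K := by positivity
  -- The Harnack constant: `d(z,x) ≤ δ y / 2 + d(x,y)`, with `d(x,y) ≤ K * min (δ x) (δ y)`,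
  -- `δ y ≤ 2 * δ z` and `δ y ≤ (1 + K) * δ x`, gives `d(z,x) ≤ (2 * K + 1) * min (δ z) (δ x)`.
  obtain ⟨k, hk⟩ := exists_nat_ge (2 * K + 1)
  have hCk := hC_H k
  refine ⟨min C₀⁻¹ ((C_H k * C₀ * C₀)⁻¹), C₀, by positivity, hC₀, ?_⟩
  intro x hx y hy hxy hd
  refine ⟨?_, hGupper x hx y hy hxy⟩
  -- If `V a (dist a b)` were `0`, the junk value of the quotient would force `G a b ≤ 0`.
  have hVpos : ∀ a ∈ D, ∀ b ∈ D, a ≠ b → 0 < V a (dist a b) := by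
    intro a ha b hb hab
    have hnn : 0 ≤ V a (dist a b) := by rw [hV]; exact ENNReal.toReal_nonneg
    rcases hnn.lt_or_eq with h | h
    · exact h
    · have h1 := hGupper a ha b hb hab
      have h2 := hGpos a ha b hb hab
      rw [← h, div_zero, mul_zero] at h1
      linarith
  have hdpos : 0 < dist x y := dist_pos.mpr hxy
  have hδlip : ∀ a b, δ a ≤ δ b + dist a b := by
    intro a b
    rw [hδ, hδ]
    exact Metric.infDist_le_infDist_add_dist
  have hΨVpos : 0 < Ψ (dist x y) / V x (dist x y) :=
    div_pos (hΨpos _ hdpos) (hVpos x hx y hy hxy)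
  have hmin : 0 < min (δ x) (δ y) := by
    by_contra! h
    nlinarith
  have hδx : 0 < δ x := hmin.trans_le (min_le_left _ _)
  have hδy : 0 < δ y := hmin.trans_le (min_le_right _ _)
  by_cases hxc : x ∈ closure (Metric.ball y (δ y / 2))
  · exact (mul_le_mul_of_nonneg_right (min_le_left _ _) hΨVpos.le).trans
      (hGlower x hx y hy hxy hxc)
  obtain ⟨z, hz, hzc, hzb⟩ := exists_mem_closure_diff hDconn.isPreconnected Metric.isOpen_ball
    hx hy (Metric.mem_ball_self (half_pos hδy)) hxc
  have hxb : x ∉ Metric.ball y (δ y / 2) := fun h => hxc (subset_closure h)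
  have hzy : dist z y = δ y / 2 :=
    le_antisymm (Metric.closure_ball_subset_closedBall hzc) (by simpa using hzb)
  have hxy' : δ y / 2 ≤ dist x y := by simpa using hxb
  have hzne : z ≠ y := dist_pos.mp (by rw [hzy]; exact half_pos hδy)
  have hzx : z ≠ x := by
    rintro rfl
    exact hxc hzc
  have hdx : dist x y ≤ K * δ x :=
    hd.trans (mul_le_mul_of_nonneg_left (min_le_left _ _) hKpos.le)
  have hdy : dist x y ≤ K * δ y :=
    hd.trans (mul_le_mul_of_nonneg_left (min_le_right _ _) hKpos.le)
  have htri : dist z x ≤ δ y / 2 + dist x y := by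
    have := dist_triangle z y x
    rw [hzy, dist_comm y x] at this
    exact this
  have hδz : δ y / 2 ≤ δ z := by
    have := hδlip y z
    rw [dist_comm, hzy] at this
    linarith
  have hδyx : δ y ≤ δ x + dist x y := by
    have := hδlip y x
    rwa [dist_comm] at this
  have hclose : dist z x ≤ (k : ℝ) * min (δ z) (δ x) := by
    have h1 : dist z x ≤ (2 * K + 1) * min (δ z) (δ x) := by
      rcases min_choice (δ z) (δ x) with h | h <;> rw [h] <;> nlinarith
    exact h1.trans (mul_le_mul_of_nonneg_right hk (le_min (by linarith) hδx.le))
  have hH := hHarnack k y hy z ⟨hz, hzb⟩ x ⟨hx, hxb⟩ hclose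
  have hlow := hGlower z hz y hy hzne hzc
  have hcmp := hΨV z hz y hy x hx hzne hxy.symm hzx (by rw [hzy, dist_comm y x]; exact hxy')
  rw [dist_comm y x] at hcmp
  have hVz := hVpos z hz y hy hzne
  have hVx := hVpos x hx y hy hxy
  have hΨz : 0 < Ψ (dist z y) := hΨpos _ (dist_pos.mpr hzne)
  have hcmp' : Ψ (dist x y) / V x (dist x y) ≤ C₀ * (Ψ (dist z y) / V z (dist z y)) := by
    rw [← mul_div_assoc, div_le_div_iff₀ hΨz hVz] at hcmp
    rw [← mul_div_assoc, div_le_div_iff₀ hVx hVz]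
    linarith
  refine (mul_le_mul_of_nonneg_right (min_le_right _ _) hΨVpos.le).trans ?_
  rw [inv_mul_le_iff₀ (by positivity)] at hlow ⊢
  calc Ψ (dist x y) / V x (dist x y) ≤ C₀ * (Ψ (dist z y) / V z (dist z y)) := hcmp'
    _ ≤ C₀ * (C₀ * (C_H k * G x y)) := by gcongr; exact hlow.trans (by gcongr)
    _ = C_H k * C₀ * C₀ * G x y := by ring
end

section
/- Let (Y,d) be a metric space, let D⊆Y be a nonempty open set with nonempty boundary ∂D, write δ(x)=d(x,Y∖D), and fix o∈D and a constant c_D>0. Suppose that for every ξ∈∂D there exists a continuous curve γ:[0,1]→Y with γ(0)=ξ, γ(1)=o, γ(t)∈D for all t∈(0,1], and δ(γ(t)) ≥ c_D·min(d(ξ,γ(t)), d(γ(t),o)) for all t∈[0,1]. Then D satisfies the interior corkscrew condition with M=max(3, 1/c_D) and r₀=δ(o)/2: for every ξ∈∂D and every 0<r≤r₀ there exists x∈D with d(x,ξ) ≤ r and δ(x) ≥ r/M. -/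
/-!
Since `ξ ∉ D`, we have `d(ξ, o) ≥ δ(o) ≥ 2r`. By the intermediate value theorem the curve from `ξ`
to `o` passes through a point `x` with `d(ξ, x) = r`, and then `d(x, o) ≥ 2r - r = r` by the
triangle inequality. So the minimum in the curve condition equals `r` at `x`, which gives
`δ(x) ≥ c_D r ≥ r / max(3, 1 / c_D)`.
-/

open MeasureTheory Metric Set

theorem stmt15 {Y : Type*} [MetricSpace Y] (D : Set Y) (hDopen : IsOpen D)
    (hDne : D.Nonempty) (hbdne : (frontier D).Nonempty)
    (δ : Y → ℝ) (hδ : ∀ x, δ x = Metric.infDist x Dᶜ)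
    (o : Y) (ho : o ∈ D) (c_D : ℝ) (hc_D : 0 < c_D)
    (hcurve : ∀ ξ ∈ frontier D, ∃ γ : ℝ → Y,
      ContinuousOn γ (Set.Icc (0 : ℝ) 1) ∧ γ 0 = ξ ∧ γ 1 = o ∧
      (∀ t ∈ Set.Ioc (0 : ℝ) 1, γ t ∈ D) ∧
      (∀ t ∈ Set.Icc (0 : ℝ) 1,
        c_D * min (dist ξ (γ t)) (dist (γ t) o) ≤ δ (γ t))) :
    ∀ ξ ∈ frontier D, ∀ r : ℝ, 0 < r → r ≤ δ o / 2 →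
      ∃ x ∈ D, dist x ξ ≤ r ∧ r / max 3 (1 / c_D) ≤ δ x := by
  intro ξ hξ r hr hr0
  obtain ⟨γ, hcont, h0, h1, hin, hcor⟩ := hcurve ξ hξ
  have hξD : ξ ∈ Dᶜ := fun h => by
    rw [hDopen.frontier_eq] at hξ
    exact hξ.2 h
  have hoξ : 2 * r ≤ dist o ξ := by
    have h := Metric.infDist_le_dist_of_mem (x := o) hξD
    rw [← hδ o] at h
    linarith
  have hf : ContinuousOn (fun t => dist ξ (γ t)) (Set.Icc (0 : ℝ) 1) :=
    by fun_prop
  have hr_mem : r ∈ Set.Icc (dist ξ (γ 0)) (dist ξ (γ 1)) := by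
    rw [h0, h1, dist_self, dist_comm ξ o]
    exact ⟨hr.le, by linarith⟩
  obtain ⟨t, ht, htr⟩ := intermediate_value_Icc zero_le_one hf hr_mem
  replace htr : dist ξ (γ t) = r := htr
  have ht0 : t ≠ 0 := by
    rintro rfl
    rw [h0, dist_self] at htr
    exact hr.ne htr
  refine ⟨γ t, hin t ⟨lt_of_le_of_ne ht.1 ht0.symm, ht.2⟩, ?_, ?_⟩
  · rw [dist_comm, htr]
  · have hto : r ≤ dist (γ t) o := by
      have h := dist_triangle ξ (γ t) o
      rw [dist_comm ξ o] at h
      linarith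
    have hδt := hcor t ht
    rw [htr, min_eq_left hto] at hδt
    calc r / max 3 (1 / c_D) ≤ r / (1 / c_D) :=
          div_le_div_of_nonneg_left hr.le (by positivity) (le_max_right _ _)
      _ = c_D * r := by field_simp
      _ ≤ δ (γ t) := hδt
end
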